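/- Let γ₁ and γ₂ be faces of Γ such that γ₁ is a facet of γ₂, i.e., γ₁ ⊊ γ₂ and dim γ₁ = dim γ₂ − 1. Then σ̄(γ₂) ⊆ σ̄(γ₁), σ̄(γ₂) is a face of the closed convex cone σ̄(γ₁), and dim σ̄(γ₂) = dim σ̄(γ₁) − 1. -/

import Mathlib

/-!
For a nonempty face `γ = γ_{a₀}`, the closed cone `σ̄(γ)` is
`C(γ) = {a ≥ 0 : every point of γ minimises ⟨a, ·⟩ on Γ}` (`sigmaConeCl_eq`): this set is closed and
contains `σ(γ)`, and for `a ∈ C(γ)` the points `a + ε a₀`, `ε > 0`, lie in `σ(γ)` and tend to `a`.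

* The description makes `σ̄` inclusion-reversing.
* If `b₁ ∈ γ₁` and `b₂` is a relative interior point of `γ₂`, the form `a ↦ ⟨a, b₂ - b₁⟩` is
  nonnegative on `C(γ₁)`. Where it vanishes, `b₂` minimises `⟨a, ·⟩` on `Γ`; a linear form that is
  minimal at a relative interior point of `γ₂` is constant on `γ₂`, so `a ∈ C(γ₂)`
  (`minimal_of_intrinsicInterior`).
* `dim C(γ) + dim γ = n` (`dimSet_minCone_add`): the span of `C(γ)` is the orthogonal complement of
  the direction `L` of the affine span of `γ`. Indeed if `v ⊥ L` then `a₀ + ε v ∈ C(γ)` for small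
  `ε > 0` (`exists_perturb_mem_minCone`), because only finitely many inequalities, one for each
  coordinate and each point of `S`, have to be preserved, and those which are equalities at `a₀`
  remain so.
-/

open Finset Set Pointwise

noncomputable section

/-- Standard inner product on `ℝ^n`. -/
def dotR {n : ℕ} (a b : Fin n → ℝ) : ℝ := ∑ i, a i * b i

/-- The nonnegative orthant `ℝ_{≥0}^n`. -/
def nonnegOrthant (n : ℕ) : Set (Fin n → ℝ) := {x | ∀ i, 0 ≤ x i}

/-- Coercion of an integer lattice point to `ℝ^n`. -/
def natCastVec {n : ℕ} (α : Fin n → ℕ) : Fin n → ℝ := fun i => (α i : ℝ)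

/-- The Newton polyhedron of a finite set `S ⊆ ℕ^n`: the convex hull of `S + ℝ_{≥0}^n`. -/
def newtonPolyhedron {n : ℕ} (S : Finset (Fin n → ℕ)) : Set (Fin n → ℝ) :=
  convexHull ℝ {x | ∃ α ∈ S, ∃ v ∈ nonnegOrthant n, x = natCastVec α + v}

/-- `l_Γ(a) = inf {⟨a,b⟩ : b ∈ Γ}`. -/
def lGamma {n : ℕ} (S : Finset (Fin n → ℕ)) (a : Fin n → ℝ) : ℝ :=
  sInf ((fun b => dotR a b) '' newtonPolyhedron S)

/-- `γ_a = {b ∈ Γ : ⟨a,b⟩ = l_Γ(a)}`. -/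
def faceAt {n : ℕ} (S : Finset (Fin n → ℕ)) (a : Fin n → ℝ) : Set (Fin n → ℝ) :=
  {b ∈ newtonPolyhedron S | dotR a b = lGamma S a}

/-- A face of `Γ` is a set of the form `γ_a` with `a ∈ ℝ_{≥0}^n`. -/
def IsFaceOf {n : ℕ} (S : Finset (Fin n → ℕ)) (γ : Set (Fin n → ℝ)) : Prop :=
  ∃ a ∈ nonnegOrthant n, γ = faceAt S a

/-- A proper face is a face different from `Γ`. -/
def IsProperFaceOf {n : ℕ} (S : Finset (Fin n → ℕ)) (γ : Set (Fin n → ℝ)) : Prop :=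
  IsFaceOf S γ ∧ γ ≠ newtonPolyhedron S

/-- `σ(γ) = {a ∈ ℝ_{≥0}^n : γ_a = γ}`. -/
def sigmaCone {n : ℕ} (S : Finset (Fin n → ℕ)) (γ : Set (Fin n → ℝ)) : Set (Fin n → ℝ) :=
  {a ∈ nonnegOrthant n | faceAt S a = γ}

/-- `σ̄(γ)`, the closure of `σ(γ)` in `ℝ^n`. -/
def sigmaConeCl {n : ℕ} (S : Finset (Fin n → ℕ)) (γ : Set (Fin n → ℝ)) : Set (Fin n → ℝ) :=
  closure (sigmaCone S γ)

/-- `F` is a face of the closed convex cone `C`: `F = {x ∈ C | λ x = 0}` for a linear form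
`λ` nonnegative on `C`. -/
def IsConeFaceOf {n : ℕ} (C F : Set (Fin n → ℝ)) : Prop :=
  ∃ lam : (Fin n → ℝ) →ₗ[ℝ] ℝ, (∀ x ∈ C, 0 ≤ lam x) ∧ F = {x ∈ C | lam x = 0}

/-- The dimension of a subset of `ℝ^n`: the dimension of its affine span. -/
def dimSet {n : ℕ} (s : Set (Fin n → ℝ)) : ℕ :=
  Module.finrank ℝ (affineSpan ℝ s).direction

/-- `ℝ_{≥0}^I = {x ∈ ℝ_{≥0}^n : x_i = 0 for i ∉ I}`. -/
def orthantOn (n : ℕ) (I : Set (Fin n)) : Set (Fin n → ℝ) :=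
  {x | (∀ i, 0 ≤ x i) ∧ ∀ i ∉ I, x i = 0}

/-- `ℝ_{≥0}^{n₁} × ℝ_{>0}^{n₂} = {a ∈ ℝ_{≥0}^n : a_i > 0 for i > n₁}`. -/
def mixedOrthant (n n₁ : ℕ) : Set (Fin n → ℝ) :=
  {x | (∀ i, 0 ≤ x i) ∧ ∀ i : Fin n, n₁ ≤ (i : ℕ) → 0 < x i}

section NewtonFaces

open Filter Topology

variable {n : ℕ}

/-! ### Inner product and Newton polyhedron -/

lemma dotR_add_left (a b c : Fin n → ℝ) : dotR (a + b) c = dotR a c + dotR b c :=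
  add_dotProduct a b c

lemma dotR_smul_left (t : ℝ) (a c : Fin n → ℝ) : dotR (t • a) c = t * dotR a c :=
  smul_dotProduct t a c

lemma dotR_add_right (a b c : Fin n → ℝ) : dotR a (b + c) = dotR a b + dotR a c :=
  dotProduct_add a b c

lemma dotR_sub_right (a b c : Fin n → ℝ) : dotR a (b - c) = dotR a b - dotR a c :=
  dotProduct_sub a b c

lemma dotR_smul_right (t : ℝ) (a c : Fin n → ℝ) : dotR a (t • c) = t * dotR a c :=
  dotProduct_smul t a c

lemma dotR_single (a : Fin n → ℝ) (i : Fin n) : dotR a (Pi.single i 1) = a i :=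
  dotProduct_single_one a i

lemma isLinearMap_dotR (a : Fin n → ℝ) : IsLinearMap ℝ (dotR a) :=
  ⟨dotR_add_right a, fun t c => dotR_smul_right t a c⟩

lemma dotR_nonneg {a b : Fin n → ℝ} (ha : a ∈ nonnegOrthant n) (hb : b ∈ nonnegOrthant n) :
    0 ≤ dotR a b :=
  Finset.sum_nonneg fun i _ => mul_nonneg (ha i) (hb i)

lemma continuous_dotR_left (b : Fin n → ℝ) : Continuous fun a => dotR a b := by
  unfold dotR; fun_prop

lemma natCastVec_mem {S : Finset (Fin n → ℕ)} {α : Fin n → ℕ} (hα : α ∈ S) :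
    natCastVec α ∈ newtonPolyhedron S :=
  subset_convexHull ℝ _ ⟨α, hα, 0, fun _ => le_rfl, by simp⟩

lemma le_dotR_of_forall {S : Finset (Fin n → ℕ)} {a : Fin n → ℝ} (ha : a ∈ nonnegOrthant n)
    {c : ℝ} (h : ∀ α ∈ S, c ≤ dotR a (natCastVec α)) :
    ∀ b ∈ newtonPolyhedron S, c ≤ dotR a b := by
  have : newtonPolyhedron S ⊆ {b | c ≤ dotR a b} := by
    refine convexHull_min ?_ (convex_halfSpace_ge (isLinearMap_dotR a) c)
    rintro _ ⟨α, hα, v, hv, rfl⟩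
    have h1 := h α hα
    have h2 := dotR_nonneg ha hv
    simp only [mem_ofPred_eq, dotR_add_right]
    linarith
  exact this

lemma add_mem_newtonPolyhedron {S : Finset (Fin n → ℕ)} {b v : Fin n → ℝ}
    (hb : b ∈ newtonPolyhedron S) (hv : v ∈ nonnegOrthant n) : b + v ∈ newtonPolyhedron S := by
  have : newtonPolyhedron S ⊆ (fun b => b + v) ⁻¹' newtonPolyhedron S := by
    refine convexHull_min ?_ ((convex_convexHull ℝ _).translate_preimage_left v)
    rintro _ ⟨α, hα, w, hw, rfl⟩
    exact subset_convexHull ℝ _ ⟨α, hα, w + v, fun i => add_nonneg (hw i) (hv i), add_assoc _ _ _⟩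
  exact this hb

/-! ### Faces -/

lemma exists_minimizer {S : Finset (Fin n → ℕ)} (hS : S.Nonempty) {a : Fin n → ℝ}
    (ha : a ∈ nonnegOrthant n) :
    ∃ b ∈ newtonPolyhedron S, ∀ b' ∈ newtonPolyhedron S, dotR a b ≤ dotR a b' := by
  obtain ⟨α, hα, h⟩ := S.exists_min_image (fun α => dotR a (natCastVec α)) hS
  exact ⟨_, natCastVec_mem hα, le_dotR_of_forall ha h⟩

/-- Since the infimum `l_Γ(a)` is attained, `γ_a` is the set of minimisers of `⟨a, ·⟩` on `Γ`. -/
lemma mem_faceAt_iff {S : Finset (Fin n → ℕ)} (hS : S.Nonempty) {a : Fin n → ℝ}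
    (ha : a ∈ nonnegOrthant n) {b : Fin n → ℝ} :
    b ∈ faceAt S a ↔
      b ∈ newtonPolyhedron S ∧ ∀ b' ∈ newtonPolyhedron S, dotR a b ≤ dotR a b' := by
  have key : ∀ c ∈ newtonPolyhedron S, (∀ b' ∈ newtonPolyhedron S, dotR a c ≤ dotR a b') →
      lGamma S a = dotR a c := by
    intro c hc hmin
    refine IsLeast.csInf_eq ⟨⟨c, hc, rfl⟩, ?_⟩
    rintro _ ⟨b', hb', rfl⟩
    exact hmin b' hb'
  constructor
  · rintro ⟨hb, hb'⟩
    obtain ⟨c, hc, hmin⟩ := exists_minimizer hS ha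
    refine ⟨hb, fun b' h => ?_⟩
    rw [hb', key c hc hmin]
    exact hmin b' h
  · rintro ⟨hb, hmin⟩
    exact ⟨hb, (key b hb hmin).symm⟩

lemma faceAt_nonempty {S : Finset (Fin n → ℕ)} (hS : S.Nonempty) {a : Fin n → ℝ}
    (ha : a ∈ nonnegOrthant n) : (faceAt S a).Nonempty := by
  obtain ⟨b, hb, hmin⟩ := exists_minimizer hS ha
  exact ⟨b, (mem_faceAt_iff hS ha).2 ⟨hb, hmin⟩⟩

lemma convex_faceAt (S : Finset (Fin n → ℕ)) (a : Fin n → ℝ) : Convex ℝ (faceAt S a) :=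
  (convex_convexHull ℝ _).inter (convex_hyperplane (isLinearMap_dotR a) _)

/-! ### The closed cone of a face -/

/-- The vectors of the nonnegative orthant for which every point of `γ` minimises the inner
product on `Γ`; for a face `γ` this is `σ̄(γ)`, see `sigmaConeCl_eq`. -/
def minCone (S : Finset (Fin n → ℕ)) (γ : Set (Fin n → ℝ)) : Set (Fin n → ℝ) :=
  {a | a ∈ nonnegOrthant n ∧ ∀ b ∈ γ, ∀ b' ∈ newtonPolyhedron S, dotR a b ≤ dotR a b'}

lemma isClosed_minCone (S : Finset (Fin n → ℕ)) (γ : Set (Fin n → ℝ)) :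
    IsClosed (minCone S γ) := by
  have h1 : IsClosed (nonnegOrthant n) := by
    simp only [nonnegOrthant, ofPred_forall]
    exact isClosed_iInter fun i => isClosed_le continuous_const (continuous_apply i)
  have h2 : IsClosed {a : Fin n → ℝ |
      ∀ b ∈ γ, ∀ b' ∈ newtonPolyhedron S, dotR a b ≤ dotR a b'} := by
    simp only [ofPred_forall]
    exact isClosed_iInter fun b => isClosed_iInter fun _ => isClosed_iInter fun b' =>
      isClosed_iInter fun _ => isClosed_le (continuous_dotR_left b) (continuous_dotR_left b')
  exact h1.inter h2

lemma minCone_anti (S : Finset (Fin n → ℕ)) {γ₁ γ₂ : Set (Fin n → ℝ)} (h : γ₁ ⊆ γ₂) :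
    minCone S γ₂ ⊆ minCone S γ₁ :=
  fun _ ha => ⟨ha.1, fun b hb => ha.2 b (h hb)⟩

lemma add_smul_mem_sigmaCone {S : Finset (Fin n → ℕ)} (hS : S.Nonempty) {a₀ a : Fin n → ℝ}
    (ha₀ : a₀ ∈ nonnegOrthant n) (ha : a ∈ minCone S (faceAt S a₀)) {ε : ℝ} (hε : 0 < ε) :
    a + ε • a₀ ∈ sigmaCone S (faceAt S a₀) := by
  have hpos : a + ε • a₀ ∈ nonnegOrthant n := fun i =>
    add_nonneg (ha.1 i) (mul_nonneg hε.le (ha₀ i))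
  refine ⟨hpos, ?_⟩
  ext b
  rw [mem_faceAt_iff hS hpos]
  simp only [dotR_add_left, dotR_smul_left]
  constructor
  · rintro ⟨hb, hmin⟩
    obtain ⟨c, hc⟩ := faceAt_nonempty hS ha₀
    obtain ⟨hc1, hc2⟩ := (mem_faceAt_iff hS ha₀).1 hc
    refine (mem_faceAt_iff hS ha₀).2 ⟨hb, fun b' hb' => ?_⟩
    -- `c` minimises both `a` and `a₀`, so `b` can minimise their sum only if it minimises each.
    have h1 := hmin c hc1
    have h2 := ha.2 c hc b hb
    have h3 : dotR a₀ b ≤ dotR a₀ c := le_of_mul_le_mul_left (by linarith) hε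
    exact h3.trans (hc2 b' hb')
  · intro hb
    have hb2 := (mem_faceAt_iff hS ha₀).1 hb
    exact ⟨hb2.1, fun b' hb' => add_le_add (ha.2 b hb b' hb')
      (mul_le_mul_of_nonneg_left (hb2.2 b' hb') hε.le)⟩

theorem sigmaConeCl_eq {S : Finset (Fin n → ℕ)} (hS : S.Nonempty) {γ : Set (Fin n → ℝ)}
    (hγ : IsFaceOf S γ) : sigmaConeCl S γ = minCone S γ := by
  obtain ⟨a₀, ha₀, rfl⟩ := hγ
  apply Set.Subset.antisymm
  · refine closure_minimal ?_ (isClosed_minCone _ _)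
    rintro a ⟨ha, hface⟩
    refine ⟨ha, fun b hb => ?_⟩
    rw [← hface] at hb
    exact ((mem_faceAt_iff hS ha).1 hb).2
  · intro a ha
    have hc : Continuous fun ε : ℝ => a + ε • a₀ := by fun_prop
    have ht : Tendsto (fun ε : ℝ => a + ε • a₀) (𝓝[>] 0) (𝓝 a) := by
      have := hc.tendsto 0
      simp only [zero_smul, add_zero] at this
      exact this.mono_left nhdsWithin_le_nhds
    refine mem_closure_of_tendsto ht ?_
    filter_upwards [self_mem_nhdsWithin] with ε hε
    exact add_smul_mem_sigmaCone hS ha₀ ha hε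

/-! ### The face property -/

/-- Segments ending at a relative interior point can be prolonged inside the set. -/
lemma exists_extend_of_intrinsicInterior {s : Set (Fin n → ℝ)} {x y : Fin n → ℝ}
    (hx : x ∈ intrinsicInterior ℝ s) (hy : y ∈ s) : ∃ ε : ℝ, 0 < ε ∧ x + ε • (x - y) ∈ s := by
  obtain ⟨z, hz, rfl⟩ := mem_intrinsicInterior.1 hx
  have hmem : ∀ ε : ℝ, (z : Fin n → ℝ) + ε • ((z : Fin n → ℝ) - y) ∈ affineSpan ℝ s := by
    intro ε
    have h := AffineSubspace.smul_vsub_vadd_mem (affineSpan ℝ s) ε z.2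
      (subset_affineSpan ℝ s hy) z.2
    rwa [vsub_eq_sub, vadd_eq_add, add_comm] at h
  have hc : Continuous fun ε : ℝ =>
      (⟨_, hmem ε⟩ : affineSpan ℝ s) := Continuous.subtype_mk (by fun_prop) _
  have hev : ∀ᶠ ε : ℝ in 𝓝 0,
      (⟨_, hmem ε⟩ : affineSpan ℝ s) ∈ ((↑) ⁻¹' s : Set (affineSpan ℝ s)) := by
    refine hc.continuousAt.eventually_mem ?_
    have : (⟨_, hmem 0⟩ : affineSpan ℝ s) = z := by ext1; simp
    rw [this]
    exact mem_interior_iff_mem_nhds.1 hz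
  obtain ⟨ε, h1, h2⟩ := ((hev.filter_mono nhdsWithin_le_nhds).and
    (self_mem_nhdsWithin (s := Ioi (0 : ℝ)))).exists
  exact ⟨ε, h2, h1⟩

/-- A linear form whose minimum over `Γ` is attained at a relative interior point of `γ ⊆ Γ`
attains it on all of `γ`. -/
lemma minimal_of_intrinsicInterior {S : Finset (Fin n → ℕ)} {γ : Set (Fin n → ℝ)}
    (hγ : γ ⊆ newtonPolyhedron S) {a x : Fin n → ℝ} (hx : x ∈ intrinsicInterior ℝ γ)
    (hmin : ∀ b' ∈ newtonPolyhedron S, dotR a x ≤ dotR a b') :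
    ∀ b ∈ γ, ∀ b' ∈ newtonPolyhedron S, dotR a b ≤ dotR a b' := by
  intro b hb b' hb'
  obtain ⟨ε, hε, hmem⟩ := exists_extend_of_intrinsicInterior hx hb
  have h1 := hmin _ (hγ hmem)
  rw [dotR_add_right, dotR_smul_right, dotR_sub_right] at h1
  have h2 : 0 ≤ dotR a x - dotR a b := nonneg_of_mul_nonneg_right (by linarith) hε
  linarith [hmin b' hb']

theorem isConeFaceOf_minCone {S : Finset (Fin n → ℕ)} (hS : S.Nonempty)
    {γ₁ γ₂ : Set (Fin n → ℝ)} (hγ₁ : IsFaceOf S γ₁) (hγ₂ : IsFaceOf S γ₂) (hsub : γ₁ ⊆ γ₂) :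
    IsConeFaceOf (minCone S γ₁) (minCone S γ₂) := by
  obtain ⟨a₁, ha₁, rfl⟩ := hγ₁
  obtain ⟨a₂, ha₂, rfl⟩ := hγ₂
  obtain ⟨b₁, hb₁⟩ := faceAt_nonempty hS ha₁
  obtain ⟨b₂, hb₂⟩ := (faceAt_nonempty hS ha₂).intrinsicInterior (convex_faceAt S a₂)
  have hb₂' := intrinsicInterior_subset hb₂
  refine ⟨dotProductEquiv ℝ (Fin n) (b₂ - b₁), ?_, ?_⟩
  all_goals
    have hlam : ∀ a, dotProductEquiv ℝ (Fin n) (b₂ - b₁) a = dotR a b₂ - dotR a b₁ := fun a => by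
      rw [← dotR_sub_right]; exact dotProduct_comm (b₂ - b₁) a
    simp only [hlam]
  · intro a ha
    exact sub_nonneg.2 (ha.2 b₁ hb₁ b₂ hb₂'.1)
  · ext a
    constructor
    · intro ha
      refine ⟨minCone_anti S hsub ha, ?_⟩
      have h1 := ha.2 b₂ hb₂' b₁ hb₁.1
      have h2 := ha.2 b₁ (hsub hb₁) b₂ hb₂'.1
      linarith
    · rintro ⟨ha, h0⟩
      refine ⟨ha.1, minimal_of_intrinsicInterior (fun b hb => hb.1) hb₂ fun b' hb' => ?_⟩
      linarith [ha.2 b₁ hb₁ b' hb']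

/-! ### Dimensions -/

/-- The orthogonal complement of the direction of the affine span of `γ`, encoded through the
dual annihilator and the identification of `ℝ^n` with its dual. -/
def perp (γ : Set (Fin n → ℝ)) : Submodule ℝ (Fin n → ℝ) :=
  (vectorSpan ℝ γ).dualAnnihilator.comap (dotProductEquiv ℝ (Fin n)).toLinearMap

lemma mem_perp_iff {γ : Set (Fin n → ℝ)} {v : Fin n → ℝ} :
    v ∈ perp γ ↔ ∀ b ∈ γ, ∀ c ∈ γ, dotR v b = dotR v c := by
  have h1 : v ∈ perp γ ↔ ∀ w ∈ vectorSpan ℝ γ, dotR v w = 0 := by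
    simp only [perp, Submodule.mem_comap, Submodule.mem_dualAnnihilator]
    rfl
  rw [h1]
  constructor
  · intro h b hb c hc
    have := h _ (vsub_mem_vectorSpan ℝ hb hc)
    rwa [vsub_eq_sub, dotR_sub_right, sub_eq_zero] at this
  · intro h w hw
    have : vectorSpan ℝ γ ≤ LinearMap.ker (dotProductEquiv ℝ (Fin n) v) := by
      refine Submodule.span_le.2 ?_
      rintro _ ⟨b, hb, c, hc, rfl⟩
      change dotR v (b - c) = 0
      rw [dotR_sub_right, h b hb c hc, sub_self]
    exact this hw

lemma finrank_perp_add (γ : Set (Fin n → ℝ)) :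
    Module.finrank ℝ (perp γ) + dimSet γ = n := by
  have h1 := Subspace.finrank_add_finrank_dualAnnihilator_eq (vectorSpan ℝ γ)
  have h2 : Module.finrank ℝ (perp γ) =
      Module.finrank ℝ (vectorSpan ℝ γ).dualAnnihilator :=
    ((dotProductEquiv ℝ (Fin n)).ofSubmodule' _).finrank_eq
  rw [Module.finrank_fin_fun] at h1
  rw [dimSet, direction_affineSpan, h2]
  omega

lemma mem_minCone_self {S : Finset (Fin n → ℕ)} (hS : S.Nonempty) {a₀ : Fin n → ℝ}
    (ha₀ : a₀ ∈ nonnegOrthant n) : a₀ ∈ minCone S (faceAt S a₀) :=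
  ⟨ha₀, fun _ hb => ((mem_faceAt_iff hS ha₀).1 hb).2⟩

/-- If `a₀ i = 0`, the face of `a₀` is stable under translation by the `i`-th basis vector, which
therefore lies in the direction of its affine span. -/
lemma apply_eq_zero_of_mem_perp {S : Finset (Fin n → ℕ)} (hS : S.Nonempty) {a₀ v : Fin n → ℝ}
    (ha₀ : a₀ ∈ nonnegOrthant n) (hv : v ∈ perp (faceAt S a₀)) {i : Fin n} (hi : a₀ i = 0) :
    v i = 0 := by
  obtain ⟨b, hb⟩ := faceAt_nonempty hS ha₀
  have hs : Pi.single i 1 ∈ nonnegOrthant n := by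
    intro j
    by_cases h : j = i
    · subst h; simp
    · simp [h]
  have hb' : b + Pi.single i 1 ∈ faceAt S a₀ :=
    ⟨add_mem_newtonPolyhedron hb.1 hs, by rw [dotR_add_right, dotR_single, hi, add_zero, hb.2]⟩
  have := mem_perp_iff.1 hv _ hb' _ hb
  rw [dotR_add_right, dotR_single] at this
  linarith

lemma exists_perturb_mem_minCone {S : Finset (Fin n → ℕ)} (hS : S.Nonempty) {a₀ v : Fin n → ℝ}
    (ha₀ : a₀ ∈ nonnegOrthant n) (hv : v ∈ perp (faceAt S a₀)) :
    ∃ ε : ℝ, 0 < ε ∧ a₀ + ε • v ∈ minCone S (faceAt S a₀) := by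
  obtain ⟨c, hc⟩ := faceAt_nonempty hS ha₀
  have hc' := (mem_faceAt_iff hS ha₀).1 hc
  have hcont : Continuous fun ε : ℝ => a₀ + ε • v := by fun_prop
  have h1 : ∀ᶠ ε : ℝ in 𝓝[>] 0, ∀ i, 0 ≤ (a₀ + ε • v) i := by
    refine eventually_all.2 fun i => ?_
    rcases (ha₀ i).eq_or_lt with h | h
    · have := apply_eq_zero_of_mem_perp hS ha₀ hv h.symm
      refine Eventually.of_forall fun ε => ?_
      simp [this, ← h]
    · have ht := ((continuous_apply i).comp hcont).tendsto 0
      simp only [Function.comp_apply, zero_smul, add_zero] at ht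
      exact ((ht.eventually_const_lt h).mono fun _ => le_of_lt).filter_mono nhdsWithin_le_nhds
  have h2 : ∀ᶠ ε : ℝ in 𝓝[>] 0, ∀ β ∈ S,
      dotR (a₀ + ε • v) c ≤ dotR (a₀ + ε • v) (natCastVec β) := by
    refine (Filter.eventually_all_finset S).2 fun β hβ => ?_
    by_cases hm : natCastVec β ∈ faceAt S a₀
    · refine Eventually.of_forall fun ε => ?_
      rw [dotR_add_left, dotR_add_left, dotR_smul_left, dotR_smul_left,
        mem_perp_iff.1 hv _ hm _ hc, hm.2, hc.2]
    · have hlt : dotR a₀ c < dotR a₀ (natCastVec β) := by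
        refine lt_of_le_of_ne (hc'.2 _ (natCastVec_mem hβ)) fun h => hm ⟨natCastVec_mem hβ, ?_⟩
        rw [← h, hc.2]
      have ht1 := ((continuous_dotR_left c).comp hcont).tendsto 0
      have ht2 := ((continuous_dotR_left (natCastVec β)).comp hcont).tendsto 0
      simp only [Function.comp_apply, zero_smul, add_zero] at ht1 ht2
      exact ((ht1.eventually_lt ht2 hlt).mono fun _ => le_of_lt).filter_mono nhdsWithin_le_nhds
  obtain ⟨ε, ⟨h1, h2⟩, hε⟩ :=
    ((h1.and h2).and (self_mem_nhdsWithin (s := Ioi (0 : ℝ)))).exists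
  refine ⟨ε, hε, h1, fun b hb b' hb' => ?_⟩
  have hbc : dotR (a₀ + ε • v) b = dotR (a₀ + ε • v) c := by
    rw [dotR_add_left, dotR_add_left, dotR_smul_left, dotR_smul_left,
      mem_perp_iff.1 hv _ hb _ hc, hb.2, hc.2]
  rw [hbc]
  exact le_dotR_of_forall h1 h2 b' hb'

lemma vectorSpan_minCone {S : Finset (Fin n → ℕ)} (hS : S.Nonempty) {a₀ : Fin n → ℝ}
    (ha₀ : a₀ ∈ nonnegOrthant n) :
    vectorSpan ℝ (minCone S (faceAt S a₀)) = perp (faceAt S a₀) := by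
  apply le_antisymm
  · have hsub : ∀ a ∈ minCone S (faceAt S a₀), a ∈ perp (faceAt S a₀) := fun a ha =>
      mem_perp_iff.2 fun b hb c hc => le_antisymm (ha.2 b hb c hc.1) (ha.2 c hc b hb.1)
    refine Submodule.span_le.2 ?_
    rintro _ ⟨a, ha, b, hb, rfl⟩
    exact sub_mem (hsub a ha) (hsub b hb)
  · intro v hv
    obtain ⟨ε, hε, hmem⟩ := exists_perturb_mem_minCone hS ha₀ hv
    have h := vsub_mem_vectorSpan ℝ hmem (mem_minCone_self hS ha₀)
    rw [vsub_eq_sub, add_sub_cancel_left] at h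
    exact (Submodule.smul_mem_iff _ hε.ne').1 h

theorem dimSet_minCone_add {S : Finset (Fin n → ℕ)} (hS : S.Nonempty) {γ : Set (Fin n → ℝ)}
    (hγ : IsFaceOf S γ) : dimSet (minCone S γ) + dimSet γ = n := by
  obtain ⟨a₀, ha₀, rfl⟩ := hγ
  have h : dimSet (minCone S (faceAt S a₀)) = Module.finrank ℝ (perp (faceAt S a₀)) := by
    rw [dimSet, direction_affineSpan, vectorSpan_minCone hS ha₀]
  rw [h, finrank_perp_add]

end NewtonFaces

theorem sigmaConeCl_facet {n : ℕ} (hn : 1 ≤ n)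
    (S : Finset (Fin n → ℕ)) (hS : S.Nonempty) (hS0 : (0 : Fin n → ℕ) ∉ S)
    (γ₁ γ₂ : Set (Fin n → ℝ)) (hγ₁ : IsFaceOf S γ₁) (hγ₂ : IsFaceOf S γ₂)
    (hsub : γ₁ ⊂ γ₂) (hdim : dimSet γ₁ + 1 = dimSet γ₂) :
    sigmaConeCl S γ₂ ⊆ sigmaConeCl S γ₁ ∧
    IsConeFaceOf (sigmaConeCl S γ₁) (sigmaConeCl S γ₂) ∧
    dimSet (sigmaConeCl S γ₂) + 1 = dimSet (sigmaConeCl S γ₁) := by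
  rw [sigmaConeCl_eq hS hγ₁, sigmaConeCl_eq hS hγ₂]
  refine ⟨minCone_anti S hsub.1, isConeFaceOf_minCone hS hγ₁ hγ₂ hsub.1, ?_⟩
  have h1 := dimSet_minCone_add hS hγ₁
  have h2 := dimSet_minCone_add hS hγ₂
  omega
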